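/- arXiv:1507.03755 — 2 statements merged into one kernel-verified Lean document; each statement's English description precedes it below -/
import Mathlib

section
/- Let X be a real vector space, B : X → ℝ a linear map, β a real number, and c a real number. Suppose u : ℕ → X satisfies B(uₖ − χₖ·u_{k−1}) = c·(B(u_{k−1}) − (1 − χₖ)·β) for every k ≥ 1. Then for every m ≥ 1 one has B(u_m) = c·(∑_{n=0}^{m−1} B(uₙ) − β). -/
/-- χ : the sequence with χₖ = 0 for k ≤ 1 and χₖ = 1 for k > 1. -/
noncomputable def chi (k : ℕ) : ℝ := if k ≤ 1 then 0 else 1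

theorem chi_of_le_one {k : ℕ} (hk : k ≤ 1) : chi k = 0 := if_pos hk

theorem chi_of_one_lt {k : ℕ} (hk : 1 < k) : chi k = 1 := if_neg hk.not_ge

theorem sum_range_sub_chi_smul {X : Type*} [AddCommGroup X] [Module ℝ X] (u : ℕ → X) (m : ℕ) :
    ∑ k ∈ Finset.range m, (u (k + 1) - chi (k + 1) • u k) = chi (m + 1) • u m := by
  -- As `χₖ₊₂ = 1`, each summand is a difference of consecutive values of `k ↦ χₖ₊₁ uₖ`.
  calc ∑ k ∈ Finset.range m, (u (k + 1) - chi (k + 1) • u k)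
      = ∑ k ∈ Finset.range m, (chi (k + 1 + 1) • u (k + 1) - chi (k + 1) • u k) := by
        simp only [chi_of_one_lt (Nat.one_lt_succ_succ _), one_smul]
    _ = chi (m + 1) • u m - chi (0 + 1) • u 0 :=
        Finset.sum_range_sub (fun k ↦ chi (k + 1) • u k) m
    _ = chi (m + 1) • u m := by rw [chi_of_le_one le_rfl, zero_smul, sub_zero]

theorem sum_range_sub_chi_smul_of_pos {X : Type*} [AddCommGroup X] [Module ℝ X] (u : ℕ → X)
    {m : ℕ} (hm : 1 ≤ m) :
    ∑ k ∈ Finset.range m, (u (k + 1) - chi (k + 1) • u k) = u m := by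
  rw [sum_range_sub_chi_smul, chi_of_one_lt (Nat.lt_succ_of_le hm), one_smul]

theorem sum_range_one_sub_chi_smul {Y : Type*} [AddCommGroup Y] [Module ℝ Y] (β : Y)
    {m : ℕ} (hm : 1 ≤ m) :
    ∑ k ∈ Finset.range m, (1 - chi (k + 1)) • β = β := by
  simpa only [sub_smul, one_smul] using sum_range_sub_chi_smul_of_pos (fun _ ↦ β) hm

theorem mddim_boundary_telescoping_identity_general
    {S X Y : Type*} [AddCommGroup X] [Module ℝ X] [AddCommGroup Y] [Module ℝ Y] [DistribSMul S Y]
    (B : X →+ Y) (β : Y) (c : S) (u : ℕ → X)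
    (h : ∀ k : ℕ, 1 ≤ k →
      B (u k - chi k • u (k - 1)) = c • (B (u (k - 1)) - (1 - chi k) • β))
    (m : ℕ) (hm : 1 ≤ m) :
    B (u m) = c • ((∑ n ∈ Finset.range m, B (u n)) - β) :=
  calc B (u m)
      = ∑ k ∈ Finset.range m, B (u (k + 1) - chi (k + 1) • u k) := by
        rw [← map_sum, sum_range_sub_chi_smul_of_pos u hm]
    _ = ∑ k ∈ Finset.range m, c • (B (u k) - (1 - chi (k + 1)) • β) :=
        Finset.sum_congr rfl fun k _ ↦ h (k + 1) k.succ_pos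
    _ = c • ((∑ n ∈ Finset.range m, B (u n)) - β) := by
        rw [← Finset.smul_sum, Finset.sum_sub_distrib, sum_range_one_sub_chi_smul β hm]

theorem mddim_boundary_telescoping_identity
    {X : Type*} [AddCommGroup X] [Module ℝ X]
    (B : X →ₗ[ℝ] ℝ) (β c : ℝ) (u : ℕ → X)
    (h : ∀ k : ℕ, 1 ≤ k →
      B (u k - chi k • u (k - 1)) = c * (B (u (k - 1)) - (1 - chi k) * β)) :
    ∀ m : ℕ, 1 ≤ m → B (u m) = c * ((∑ n ∈ Finset.range m, B (u n)) - β) :=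
  mddim_boundary_telescoping_identity_general B.toAddMonoidHom β c u h
end

section
/- Let φ : ℝ → ℝ be analytic at 0. Set uₖ := 𝒟ₖ(φ), Sₖ := 𝒟ₖ(q ↦ sin(φ(q))) and Cₖ := 𝒟ₖ(q ↦ cos(φ(q))). Then S₀ = sin(φ(0)), and for every integer m ≥ 1, S_m = ∑_{k=0}^{m−1} (1 − k/m)·u_{m−k}·Cₖ. -/
/-!
By the chain rule `(sin ∘ φ)' = (cos ∘ φ) * φ'` near 0. Compare the Maclaurin coefficients of order
`m - 1` of the two sides: differentiation shifts coefficients, `𝒟ₙ(g') = (n + 1) 𝒟ₙ₊₁(g)`, and the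
coefficients of a product are a Cauchy product. Dividing by `m` turns the factors `m - k` coming
from `φ'` into the weights `1 - k / m`.
-/

/-- The m-th homotopy-derivative: 𝒟ₘ(g) = g⁽ᵐ⁾(0) / m!. -/
noncomputable def homotopyDeriv (m : ℕ) (g : ℝ → ℝ) : ℝ :=
  iteratedDeriv m g 0 / m.factorial

open Filter Topology

theorem deriv_comp_eventuallyEq {𝕜 𝕜' : Type*} [NontriviallyNormedField 𝕜]
    [NontriviallyNormedField 𝕜'] [NormedAlgebra 𝕜 𝕜'] {f : 𝕜' → 𝕜'} {φ : 𝕜 → 𝕜'} {x : 𝕜}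
    (hf : ContDiffAt 𝕜' 1 f (φ x)) (hφ : ContDiffAt 𝕜 1 φ x) :
    deriv (f ∘ φ) =ᶠ[𝓝 x] (deriv f ∘ φ) * deriv φ := by
  have hf_near : ∀ᶠ y in 𝓝 x, ContDiffAt 𝕜' 1 f (φ y) :=
    hφ.continuousAt.eventually (hf.eventually (by simp))
  filter_upwards [hf_near, hφ.eventually (by simp)] with y hfy hφy
  exact deriv_comp y hfy.differentiableAt_one hφy.differentiableAt_one

theorem homotopyDeriv_zero (g : ℝ → ℝ) : homotopyDeriv 0 g = g 0 := by
  simp [homotopyDeriv]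

theorem homotopyDeriv_congr {f g : ℝ → ℝ} (h : f =ᶠ[𝓝 0] g) (m : ℕ) :
    homotopyDeriv m f = homotopyDeriv m g := by
  rw [homotopyDeriv, homotopyDeriv, h.iteratedDeriv_eq]

theorem homotopyDeriv_deriv (n : ℕ) (g : ℝ → ℝ) :
    homotopyDeriv n (deriv g) = (n + 1) * homotopyDeriv (n + 1) g := by
  rw [homotopyDeriv, homotopyDeriv, ← iteratedDeriv_succ', Nat.factorial_succ]
  push_cast
  field_simp

theorem homotopyDeriv_mul {n : ℕ} {f g : ℝ → ℝ}
    (hf : ContDiffAt ℝ n f 0) (hg : ContDiffAt ℝ n g 0) :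
    homotopyDeriv n (f * g) =
      ∑ k ∈ Finset.range (n + 1), homotopyDeriv k f * homotopyDeriv (n - k) g := by
  simp only [homotopyDeriv]
  rw [iteratedDeriv_mul hf hg, Finset.sum_div]
  refine Finset.sum_congr rfl fun k hk => ?_
  rw [Nat.cast_choose ℝ (Finset.mem_range_succ_iff.mp hk)]
  field_simp

theorem homotopyDeriv_comp {m : ℕ} (hm : m ≠ 0) {f φ : ℝ → ℝ}
    (hf : ContDiffAt ℝ m f (φ 0)) (hφ : ContDiffAt ℝ m φ 0) :
    homotopyDeriv m (f ∘ φ) =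
      ∑ k ∈ Finset.range m,
        (1 - (k : ℝ) / m) * homotopyDeriv (m - k) φ * homotopyDeriv k (deriv f ∘ φ) := by
  obtain ⟨n, rfl⟩ := Nat.exists_eq_succ_of_ne_zero hm
  have one_le : (1 : WithTop ℕ∞) ≤ (n + 1 : ℕ) := by simp
  have hf'φ : ContDiffAt ℝ n (deriv f ∘ φ) 0 :=
    (hf.derivWithin (by simp)).comp 0 (hφ.of_le (by simp))
  have hφ' : ContDiffAt ℝ n (deriv φ) 0 := hφ.derivWithin (by simp)
  have hmul : (n + 1) * homotopyDeriv (n + 1) (f ∘ φ) =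
      ∑ k ∈ Finset.range (n + 1),
        homotopyDeriv k (deriv f ∘ φ) * homotopyDeriv (n - k) (deriv φ) := by
    rw [← homotopyDeriv_deriv,
      homotopyDeriv_congr (deriv_comp_eventuallyEq (hf.of_le one_le) (hφ.of_le one_le)),
      homotopyDeriv_mul hf'φ hφ']
  rw [← mul_right_inj' (Nat.cast_add_one_ne_zero (R := ℝ) n), hmul, Finset.mul_sum]
  refine Finset.sum_congr rfl fun k hk => ?_
  have hkn : k ≤ n := Finset.mem_range_succ_iff.mp hk
  rw [homotopyDeriv_deriv, Nat.succ_sub hkn, Nat.cast_sub hkn]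
  push_cast
  field_simp
  ring

theorem homotopy_deriv_sin_recursion_general (φ : ℝ → ℝ) :
    homotopyDeriv 0 (fun q => Real.sin (φ q)) = Real.sin (φ 0) ∧
    ∀ m : ℕ, 1 ≤ m → ContDiffAt ℝ m φ 0 →
      homotopyDeriv m (fun q => Real.sin (φ q)) =
        ∑ k ∈ Finset.range m,
          (1 - (k : ℝ) / m) * homotopyDeriv (m - k) φ *
            homotopyDeriv k (fun q => Real.cos (φ q)) := by
  refine ⟨homotopyDeriv_zero _, fun m hm hφ => ?_⟩
  simpa only [Real.deriv_sin, Function.comp_def] using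
    homotopyDeriv_comp (Nat.one_le_iff_ne_zero.mp hm) Real.contDiff_sin.contDiffAt hφ

theorem homotopy_deriv_sin_recursion
    (φ : ℝ → ℝ) (hφ : AnalyticAt ℝ φ 0) :
    homotopyDeriv 0 (fun q => Real.sin (φ q)) = Real.sin (φ 0) ∧
    ∀ m : ℕ, 1 ≤ m →
      homotopyDeriv m (fun q => Real.sin (φ q)) =
        ∑ k ∈ Finset.range m,
          (1 - (k : ℝ) / m) * homotopyDeriv (m - k) φ *
            homotopyDeriv k (fun q => Real.cos (φ q)) :=
  (homotopy_deriv_sin_recursion_general φ).imp_right fun h m hm => h m hm hφ.contDiffAt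
end
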